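/- In the prompt-tuned memory-augmented HMM with prompt π defined by π_{(m_{1:N},j,s)} = 1 if m_{j*} ∈ supp(b) and 0 otherwise, assume the initial hidden-state distribution is stationary (P(H_0) = A P(H_0)). If x ∈ X^T satisfies P(X_{1:T} = x) > 0 but P(X̂ = x̂) = 0, then b^T P(M_{j*} | X_{1:T} = x) = 0. -/

import Mathlib

/-!
The prompt likelihood of the fake token depends on the memory `m` only, through
`promptV b jstar m ∈ {0, 1}`. Since the forward pass is homogeneous in its initial vector and the
chain is stationary, the extra first step merely multiplies the sequence likelihood by that scalar:
`P(X̂ = x̂ | M = m) = promptV b jstar m * P(X = x | M = m)` (`hatSeqPm_eq`). All terms of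
`P(X̂ = x̂) = ∑ m, P(M = m) * P(X̂ = x̂ | M = m)` are nonnegative, so if it vanishes then every memory
`m` with `b (m jstar) ≠ 0` has `P(M = m) * P(X = x | M = m) = 0`, and each summand of
`bᵀ P(M_{j*} | X = x)` is zero.
-/

open scoped Classical
open Matrix

noncomputable section

/-- Forward pass for a Markov chain with transition matrix `A`. -/
def fwdVec {H : Type*} [Fintype H] (A : Matrix H H ℝ) :
    (H → ℝ) → List (H → ℝ) → (H → ℝ)
  | μ, [] => μ
  | μ, v :: vs => fwdVec A (A.mulVec fun h => μ h * v h) vs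

/-- `mJointAt A μ W m x i g = P(H_i = g, X_{−i} = x_{−i} | M = m)` in a
memory-augmented HMM (hidden chain `H_1, …, H_T`, `P(H_1) = A μ`). -/
def mJointAt {𝕄 S X : Type*} {N T : ℕ} [Fintype S] [DecidableEq S]
    (A : Matrix (Fin N × S) (Fin N × S) ℝ) (μ : Fin N × S → ℝ)
    (W : X → 𝕄 → Fin N × S → ℝ) (m : Fin N → 𝕄)
    (x : Fin T → X) (i : Fin T) (g : Fin N × S) : ℝ :=
  ∑ h, fwdVec A (A.mulVec μ)
    (List.ofFn fun k : Fin T =>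
      if k = i then (fun g' => if g' = g then 1 else 0)
      else fun g' => W (x k) (m g'.1) g') h

/-- `mZ … x i = P(X_{−i} = x_{−i})`. -/
def mZ {𝕄 S X : Type*} {N T : ℕ} [Fintype 𝕄] [Fintype S] [DecidableEq S]
    (pM : (Fin N → 𝕄) → ℝ) (A : Matrix (Fin N × S) (Fin N × S) ℝ)
    (μ : Fin N × S → ℝ) (W : X → 𝕄 → Fin N × S → ℝ)
    (x : Fin T → X) (i : Fin T) : ℝ :=
  ∑ m, pM m * ∑ g, mJointAt A μ W m x i g

/-- `mSeqPm … m x = P(X_{1:T} = x | M = m)`. -/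
def mSeqPm {𝕄 S X : Type*} {N T : ℕ} [Fintype S]
    (A : Matrix (Fin N × S) (Fin N × S) ℝ) (μ : Fin N × S → ℝ)
    (W : X → 𝕄 → Fin N × S → ℝ) (m : Fin N → 𝕄) (x : Fin T → X) : ℝ :=
  ∑ h, fwdVec A (A.mulVec μ)
    (List.ofFn fun k : Fin T => fun g' => W (x k) (m g'.1) g') h

/-- `mSeqP … x = P(X_{1:T} = x)`. -/
def mSeqP {𝕄 S X : Type*} {N T : ℕ} [Fintype 𝕄] [Fintype S]
    (pM : (Fin N → 𝕄) → ℝ) (A : Matrix (Fin N × S) (Fin N × S) ℝ)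
    (μ : Fin N × S → ℝ) (W : X → 𝕄 → Fin N × S → ℝ) (x : Fin T → X) : ℝ :=
  ∑ m, pM m * mSeqPm A μ W m x

/-- `mGtok … x i z = P(X_i = z | X_{−i} = x_{−i})`, the pretrained model
output `G_i(x)` at position `i`. -/
def mGtok {𝕄 S X : Type*} {N T : ℕ} [Fintype 𝕄] [Fintype S] [DecidableEq S]
    (pM : (Fin N → 𝕄) → ℝ) (A : Matrix (Fin N × S) (Fin N × S) ℝ)
    (μ : Fin N × S → ℝ) (W : X → 𝕄 → Fin N × S → ℝ)
    (x : Fin T → X) (i : Fin T) (z : X) : ℝ :=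
  (∑ m, pM m * ∑ g, mJointAt A μ W m x i g * W z (m g.1) g) / mZ pM A μ W x i

/-- `mPostH … x i g = P(H_i = g | X_{−i} = x_{−i})`. -/
def mPostH {𝕄 S X : Type*} {N T : ℕ} [Fintype 𝕄] [Fintype S] [DecidableEq S]
    (pM : (Fin N → 𝕄) → ℝ) (A : Matrix (Fin N × S) (Fin N × S) ℝ)
    (μ : Fin N × S → ℝ) (W : X → 𝕄 → Fin N × S → ℝ)
    (x : Fin T → X) (i : Fin T) (g : Fin N × S) : ℝ :=
  (∑ m, pM m * mJointAt A μ W m x i g) / mZ pM A μ W x i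

/-- The 0/1 prompt of the paper: `π_{(m_{1:N},j,s)} = 1` if `m_{j*} ∈ supp(b)`
and `0` otherwise (it does not depend on `(j,s)`). -/
def promptV {𝕄 : Type*} {N : ℕ} (b : 𝕄 → ℝ) (jstar : Fin N)
    (m : Fin N → 𝕄) : ℝ :=
  if b (m jstar) ≠ 0 then 1 else 0

/-- Conditioned on `M = m`, the emission-likelihood vector at position `k`
(0-indexed) of the modified sequence `x̂ = (z̃, x_1, …, x_T)`:
at position `0` the fake token `z̃` has likelihood `π_{(m,j,s)}`, and at
position `k ≥ 1` the token `x_k` has likelihood `W (x_k) (m j) (j,s)`. -/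
def hatEm {𝕄 S X : Type*} {N T : ℕ} (W : X → 𝕄 → Fin N × S → ℝ)
    (b : 𝕄 → ℝ) (jstar : Fin N) (m : Fin N → 𝕄) (x : Fin T → X)
    (k : Fin (T + 1)) : Fin N × S → ℝ :=
  if hk : (k : ℕ) = 0 then fun _ => promptV b jstar m
  else fun g => W (x ⟨(k : ℕ) - 1, by have := k.isLt; omega⟩) (m g.1) g

/-- `hatJointAt … m x i g = P(H_i = g, X̂_{−i} = x̂_{−i} | M = m)` for the
modified sequence `X̂` of length `T+1` (hidden chain `H_1, …, H_{T+1}`,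
`P(H_1) = A μ`). -/
def hatJointAt {𝕄 S X : Type*} {N T : ℕ} [Fintype S] [DecidableEq S]
    (A : Matrix (Fin N × S) (Fin N × S) ℝ) (μ : Fin N × S → ℝ)
    (W : X → 𝕄 → Fin N × S → ℝ) (b : 𝕄 → ℝ) (jstar : Fin N)
    (m : Fin N → 𝕄) (x : Fin T → X) (i : Fin (T + 1)) (g : Fin N × S) : ℝ :=
  ∑ h, fwdVec A (A.mulVec μ)
    (List.ofFn fun k : Fin (T + 1) =>
      if k = i then (fun g' => if g' = g then 1 else 0)
      else hatEm W b jstar m x k) h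

/-- `hatZ … x i = P(X̂_{−i} = x̂_{−i})`. -/
def hatZ {𝕄 S X : Type*} {N T : ℕ} [Fintype 𝕄] [Fintype S] [DecidableEq S]
    (pM : (Fin N → 𝕄) → ℝ) (A : Matrix (Fin N × S) (Fin N × S) ℝ)
    (μ : Fin N × S → ℝ) (W : X → 𝕄 → Fin N × S → ℝ) (b : 𝕄 → ℝ)
    (jstar : Fin N) (x : Fin T → X) (i : Fin (T + 1)) : ℝ :=
  ∑ m, pM m * ∑ g, hatJointAt A μ W b jstar m x i g

/-- `hatSeqPm … m x = P(X̂ = x̂ | M = m)`. -/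
def hatSeqPm {𝕄 S X : Type*} {N T : ℕ} [Fintype S]
    (A : Matrix (Fin N × S) (Fin N × S) ℝ) (μ : Fin N × S → ℝ)
    (W : X → 𝕄 → Fin N × S → ℝ) (b : 𝕄 → ℝ) (jstar : Fin N)
    (m : Fin N → 𝕄) (x : Fin T → X) : ℝ :=
  ∑ h, fwdVec A (A.mulVec μ) (List.ofFn (hatEm W b jstar m x)) h

/-- `hatSeqP … x = P(X̂ = x̂)`. -/
def hatSeqP {𝕄 S X : Type*} {N T : ℕ} [Fintype 𝕄] [Fintype S]
    (pM : (Fin N → 𝕄) → ℝ) (A : Matrix (Fin N × S) (Fin N × S) ℝ)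
    (μ : Fin N × S → ℝ) (W : X → 𝕄 → Fin N × S → ℝ) (b : 𝕄 → ℝ)
    (jstar : Fin N) (x : Fin T → X) : ℝ :=
  ∑ m, pM m * hatSeqPm A μ W b jstar m x

theorem fwdVec_smul {H : Type*} [Fintype H] (A : Matrix H H ℝ) (c : ℝ) (vs : List (H → ℝ))
    (μ : H → ℝ) : fwdVec A (c • μ) vs = c • fwdVec A μ vs := by
  induction vs generalizing μ with
  | nil => rfl
  | cons v vs ih =>
    simp only [fwdVec]
    rw [← ih, ← Matrix.mulVec_smul]
    congr 2
    funext h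
    simp [mul_assoc]

theorem fwdVec_nonneg {H : Type*} [Fintype H] (A : Matrix H H ℝ) (hA : ∀ g g', 0 ≤ A g' g)
    (vs : List (H → ℝ)) (hvs : ∀ v ∈ vs, ∀ h, 0 ≤ v h) (μ : H → ℝ) (hμ : ∀ h, 0 ≤ μ h) (h : H) :
    0 ≤ fwdVec A μ vs h := by
  induction vs generalizing μ with
  | nil => exact hμ h
  | cons v vs ih =>
    refine ih (fun w hw => hvs w (List.mem_cons_of_mem _ hw)) _ fun g => ?_
    exact Finset.sum_nonneg fun g' _ =>
      mul_nonneg (hA _ _) (mul_nonneg (hμ _) (hvs v List.mem_cons_self _))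

/-- Under stationarity, prepending the fake token rescales the conditional likelihood of `x` by
the prompt value. -/
theorem hatSeqPm_eq {𝕄 S X : Type*} {N T : ℕ} [Fintype S]
    (A : Matrix (Fin N × S) (Fin N × S) ℝ) (μ : Fin N × S → ℝ)
    (W : X → 𝕄 → Fin N × S → ℝ) (hstat : A.mulVec μ = μ) (b : 𝕄 → ℝ) (jstar : Fin N)
    (m : Fin N → 𝕄) (x : Fin T → X) :
    hatSeqPm A μ W b jstar m x = promptV b jstar m * mSeqPm A μ W m x := by
  have h0 : (fun h => μ h * hatEm W b jstar m x 0 h) = promptV b jstar m • μ := by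
    funext h
    simp [hatEm, mul_comm]
  have hs : (fun k : Fin T => hatEm W b jstar m x k.succ)
      = fun k : Fin T => fun g' => W (x k) (m g'.1) g' := by
    funext k
    simp [hatEm]
  simp only [hatSeqPm, mSeqPm, List.ofFn_succ, fwdVec, hstat]
  rw [h0, hs, Matrix.mulVec_smul, hstat, fwdVec_smul]
  simp [Finset.mul_sum]

/-!
STATEMENT 15 (Claim D.11 of the paper).

Prompt-tuned memory-augmented HMM with the 0/1 prompt
`π_{(m_{1:N},j,s)} = 𝟙(m_{j*} ∈ supp(b))`, assuming stationarity
(`P(H_0) = A P(H_0)`).  If `x ∈ X^T` satisfies `P(X_{1:T} = x) > 0` but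
`P(X̂ = x̂) = 0`, then `bᵀ P(M_{j*} | X_{1:T} = x) = 0`.
-/
theorem stmt15 {𝕄 S X : Type*} {N : ℕ}
    [Fintype 𝕄] [Fintype S] [Fintype X] [DecidableEq 𝕄] [DecidableEq S]
    (pM : (Fin N → 𝕄) → ℝ) (μ : Fin N × S → ℝ)
    (A : Matrix (Fin N × S) (Fin N × S) ℝ) (W : X → 𝕄 → Fin N × S → ℝ)
    (hpM0 : ∀ m, 0 ≤ pM m) (hpM1 : ∑ m, pM m = 1)
    (hμ0 : ∀ g, 0 ≤ μ g) (hμ1 : ∑ g, μ g = 1)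
    (hA0 : ∀ g g', 0 ≤ A g' g) (hA1 : ∀ g, ∑ g', A g' g = 1)
    (hW0 : ∀ z m0 g, 0 ≤ W z m0 g) (hW1 : ∀ m0 g, ∑ z, W z m0 g = 1)
    -- stationarity of the initial hidden-state distribution
    (hstat : A.mulVec μ = μ)
    (b : 𝕄 → ℝ) (jstar : Fin N)
    (T : ℕ) (x : Fin T → X)
    (hx : 0 < mSeqP pM A μ W x)
    (hhat : hatSeqP pM A μ W b jstar x = 0) :
    ∑ m0, b m0 *
        ((∑ m, if m jstar = m0 then pM m * mSeqPm A μ W m x else 0)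
          / mSeqP pM A μ W x) = 0 := by
  have hnn : ∀ m, 0 ≤ mSeqPm A μ W m x := fun m =>
    Finset.sum_nonneg fun h _ => fwdVec_nonneg A hA0 _
      (fun v hv g => by
        obtain ⟨k, rfl⟩ := List.mem_ofFn.1 hv
        exact hW0 _ _ _) _ (by rw [hstat]; exact hμ0) h
  have hterm : ∀ m, pM m * hatSeqPm A μ W b jstar m x = 0 := fun m =>
    (Finset.sum_eq_zero_iff_of_nonneg fun m _ => by
      rw [hatSeqPm_eq A μ W hstat]
      refine mul_nonneg (hpM0 m) (mul_nonneg ?_ (hnn m))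
      unfold promptV
      split_ifs <;> norm_num).1 hhat m (Finset.mem_univ m)
  refine Finset.sum_eq_zero fun m0 _ => ?_
  by_cases hb : b m0 = 0
  · rw [hb, zero_mul]
  rw [Finset.sum_eq_zero, zero_div, mul_zero]
  intro m _
  split_ifs with hm
  · have h := hterm m
    rwa [hatSeqPm_eq A μ W hstat, promptV, if_pos (by rwa [hm]), one_mul] at h
  · rfl

end
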